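/- arXiv:1402.2471 — 2 statements merged into one kernel-verified Lean document; each statement's English description precedes it below -/
import Mathlib

section
/- Every K_{s,t}-saturated n-by-n bipartite graph with 1 ≤ s ≤ t ≤ n contains at least (s+t-2)n - (s+t-2)^2 edges. -/
open Finset

/-- The bipartite graph (with parts indexed by `Fin n`) whose edge set is `E`
contains a complete bipartite graph with `a` vertices on the left and `b` on the right. -/
def containsK {n : ℕ} (E : Finset (Fin n × Fin n)) (a b : ℕ) : Prop :=
  ∃ S T : Finset (Fin n), S.card = a ∧ T.card = b ∧ ∀ u ∈ S, ∀ v ∈ T, (u, v) ∈ E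

/-- `E` is (unordered) `K_{s,t}`-saturated: no copy of `K_{s,t}` in either orientation,
and adding any missing edge creates one. -/
def Saturated {n : ℕ} (s t : ℕ) (E : Finset (Fin n × Fin n)) : Prop :=
  ¬ (containsK E s t ∨ containsK E t s) ∧
    ∀ u v : Fin n, (u, v) ∉ E →
      (containsK (insert (u, v) E) s t ∨ containsK (insert (u, v) E) t s)

/-- Degree of a left vertex. -/
def degL {n : ℕ} (E : Finset (Fin n × Fin n)) (u : Fin n) : ℕ :=
  (E.filter fun p => p.1 = u).card

/-- Degree of a right vertex. -/
def degR {n : ℕ} (E : Finset (Fin n × Fin n)) (v : Fin n) : ℕ :=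
  (E.filter fun p => p.2 = v).card


namespace KSat

open Classical in
/-- adjacency indicator -/
noncomputable def ind {α β : Type} (G : α → β → Prop) (x : α) (y : β) : ℤ := if G x y then 1 else 0

/-- number of edges between `A` and `B` -/
noncomputable def ed {α β : Type} (G : α → β → Prop) (A : Finset α) (B : Finset β) : ℤ :=
  ∑ x ∈ A, ∑ y ∈ B, ind G x y

/-- every missing pair is completed by a grid -/
def Cond {α β : Type} (G : α → β → Prop) (σ τ : ℕ) : Prop :=
  ∀ u v, ¬ G u v → ∃ (S : Finset α) (T : Finset β), (∀ x ∈ S, G x v) ∧ (∀ y ∈ T, G u y) ∧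
    (∀ x ∈ S, ∀ y ∈ T, G x y) ∧ ((S.card = σ ∧ T.card = τ) ∨ (S.card = τ ∧ T.card = σ))

section
variable {α β : Type} {G : α → β → Prop}

lemma ind_nonneg (x : α) (y : β) : 0 ≤ ind G x y := by
  unfold ind; split_ifs <;> simp

lemma ind_of (x : α) (y : β) (h : G x y) : ind G x y = 1 := by
  unfold ind; simp [h]

lemma ind_swap (x : α) (y : β) : ind (fun b a => G a b) y x = ind G x y := rfl

lemma ed_comm (A : Finset α) (B : Finset β) : ed G A B = ∑ y ∈ B, ∑ x ∈ A, ind G x y :=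
  Finset.sum_comm

lemma card_le_right {x : α} {T B : Finset β} (hTB : T ⊆ B) (h : ∀ y ∈ T, G x y) :
    (T.card : ℤ) ≤ ∑ y ∈ B, ind G x y := by
  calc (T.card : ℤ) = ∑ y ∈ T, ind G x y := by
        rw [Finset.sum_congr rfl (fun y hy => ind_of x y (h y hy))]; simp
    _ ≤ _ := Finset.sum_le_sum_of_subset_of_nonneg hTB (fun i _ _ => ind_nonneg x i)

lemma card_le_left {y : β} {S A : Finset α} (hSA : S ⊆ A) (h : ∀ x ∈ S, G x y) :
    (S.card : ℤ) ≤ ∑ x ∈ A, ind G x y :=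
  card_le_right (G := fun b a => G a b) hSA h

lemma mono_right {x : α} {T B : Finset β} (hTB : T ⊆ B) :
    ∑ y ∈ T, ind G x y ≤ ∑ y ∈ B, ind G x y :=
  Finset.sum_le_sum_of_subset_of_nonneg hTB (fun i _ _ => ind_nonneg x i)

lemma mono_left {y : β} {T B : Finset α} (hTB : T ⊆ B) :
    ∑ x ∈ T, ind G x y ≤ ∑ x ∈ B, ind G x y :=
  Finset.sum_le_sum_of_subset_of_nonneg hTB (fun i _ _ => ind_nonneg i y)

open Classical in
lemma sum_eq_card_right (x : α) (B : Finset β) :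
    ∑ y ∈ B, ind G x y = ((B.filter (fun y => G x y)).card : ℤ) := by
  unfold ind; simp

lemma const_le_sum {ι : Type} (A : Finset ι) (f : ι → ℤ) (k : ℤ) (h : ∀ x ∈ A, k ≤ f x) :
    k * A.card ≤ ∑ x ∈ A, f x := by
  have := Finset.card_nsmul_le_sum A f k h
  simpa [mul_comm] using this

lemma ed_nonneg (A : Finset α) (B : Finset β) : 0 ≤ ed G A B :=
  Finset.sum_nonneg fun x _ => Finset.sum_nonneg fun y _ => ind_nonneg x y

lemma ed_ge_left (A : Finset α) (B : Finset β) (k : ℤ)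
    (h : ∀ x ∈ A, k ≤ ∑ y ∈ B, ind G x y) : k * A.card ≤ ed G A B :=
  const_le_sum _ _ _ h

lemma ed_ge_right (A : Finset α) (B : Finset β) (k : ℤ)
    (h : ∀ y ∈ B, k ≤ ∑ x ∈ A, ind G x y) : k * B.card ≤ ed G A B := by
  rw [ed_comm]; exact const_le_sum _ _ _ h

lemma ed_union_left [DecidableEq α] {A A' : Finset α} (B : Finset β) (h : Disjoint A A') :
    ed G (A ∪ A') B = ed G A B + ed G A' B := Finset.sum_union h

lemma ed_union_right [DecidableEq β] (A : Finset α) {B B' : Finset β} (h : Disjoint B B') :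
    ed G A (B ∪ B') = ed G A B + ed G A B' := by
  rw [ed_comm, ed_comm, ed_comm]; exact Finset.sum_union h

lemma ed_compl_left [DecidableEq α] [Fintype α] (A : Finset α) (B : Finset β) :
    ed G univ B = ed G A B + ed G Aᶜ B := by
  rw [← ed_union_left B disjoint_compl_right, Finset.union_compl]

lemma ed_compl_right [DecidableEq β] [Fintype β] (A : Finset α) (B : Finset β) :
    ed G A univ = ed G A B + ed G A Bᶜ := by
  rw [← ed_union_right A disjoint_compl_right, Finset.union_compl]

lemma max_pair [Fintype α] [Fintype β] [DecidableEq α] [DecidableEq β]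
    (C : Finset α) (D : Finset β) (ρ κ : ℤ) : ∃ A B, C ⊆ A ∧ D ⊆ B ∧
    (∀ A' B', C ⊆ A' → D ⊆ B' →
      ed G A' B' - ρ * A'.card - κ * B'.card ≤ ed G A B - ρ * A.card - κ * B.card) ∧
    (∀ A' B', A ⊆ A' → B ⊆ B' →
      ed G A B - ρ * A.card - κ * B.card ≤ ed G A' B' - ρ * A'.card - κ * B'.card →
      A' = A ∧ B' = B) := by
  let P : Finset (Finset α × Finset β) := univ.filter (fun p => C ⊆ p.1 ∧ D ⊆ p.2)
  let f : Finset α × Finset β → ℤ ×ₗ ℕ := fun p =>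
    toLex (ed G p.1 p.2 - ρ * p.1.card - κ * p.2.card, p.1.card + p.2.card)
  obtain ⟨⟨A, B⟩, hp, hmax⟩ := Finset.exists_max_image P f ⟨(C, D), by simp [P]⟩
  have hp' : C ⊆ A ∧ D ⊆ B := by simpa [P] using hp
  refine ⟨A, B, hp'.1, hp'.2, ?_, ?_⟩
  · intro A' B' h1 h2
    have := hmax (A', B') (by simp [P, h1, h2])
    rw [Prod.Lex.le_iff] at this
    simp only [f, ofLex_toLex] at this
    rcases this with h | h
    · exact h.le
    · exact h.1.le
  · intro A' B' h1 h2 h3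
    have := hmax (A', B') (by simp [P, hp'.1.trans h1, hp'.2.trans h2])
    rw [Prod.Lex.le_iff] at this
    simp only [f, ofLex_toLex] at this
    have hc : A'.card + B'.card ≤ A.card + B.card := by
      rcases this with h | h
      · omega
      · exact h.2
    have c1 := Finset.card_le_card h1
    have c2 := Finset.card_le_card h2
    exact ⟨(Finset.eq_of_subset_of_card_le h1 (by omega)).symm,
      (Finset.eq_of_subset_of_card_le h2 (by omega)).symm⟩

/-- Greedy comparison of two families of weights. -/
lemma greedy {ι κ : Type} [DecidableEq ι] [DecidableEq κ] (m : ι → ℤ) (g : κ → ℤ) :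
    ∀ (k : ℕ) (V : Finset ι) (F : Finset κ), V.card = k → (∀ v ∈ V, 0 < m v) →
    (∀ w ∈ F, 0 < g w) →
    (∀ j : ℤ, ∑ v ∈ V.filter (fun v => m v ≤ j), m v ≤ ∑ w ∈ F.filter (fun w => g w ≤ j), g w) →
    V.card ≤ F.card := by
  intro k
  induction k with
  | zero => intro V F h _ _ _; omega
  | succ k ih =>
    intro V F hk hm hg hj
    obtain ⟨v, hv, hmin⟩ := Finset.exists_min_image V m (Finset.card_pos.mp (by omega))
    have hpos : 0 < ∑ x ∈ V.filter (fun x => m x ≤ m v), m x :=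
      Finset.sum_pos (fun i hi => hm i (Finset.mem_filter.mp hi).1)
        ⟨v, by simp [hv]⟩
    have hne : (F.filter (fun w => g w ≤ m v)).Nonempty := by
      by_contra h
      rw [Finset.not_nonempty_iff_eq_empty] at h
      have := hj (m v)
      rw [h] at this
      simp only [Finset.sum_empty] at this
      omega
    obtain ⟨w, hw⟩ := hne
    rw [Finset.mem_filter] at hw
    have key := ih (V.erase v) (F.erase w) (by rw [Finset.card_erase_of_mem hv]; omega)
      (fun x hx => hm x (Finset.mem_of_mem_erase hx))
      (fun x hx => hg x (Finset.mem_of_mem_erase hx)) ?_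
    · rw [Finset.card_erase_of_mem hv, Finset.card_erase_of_mem hw.1] at key
      have := Finset.card_pos.mpr ⟨w, hw.1⟩
      omega
    · intro j
      by_cases hjv : m v ≤ j
      · have h1 := hj j
        rw [← Finset.add_sum_erase _ _ (show v ∈ V.filter (fun v => m v ≤ j) by simp [hv, hjv]),
          ← Finset.add_sum_erase _ _ (show w ∈ F.filter (fun w => g w ≤ j) by
            simp [hw.1]; omega)] at h1
        rw [Finset.filter_erase, Finset.filter_erase]
        omega
      · have : (V.erase v).filter (fun v => m v ≤ j) = ∅ := by
          rw [Finset.filter_eq_empty_iff]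
          intro x hx
          have := hmin x (Finset.mem_of_mem_erase hx)
          omega
        rw [this, Finset.sum_empty]
        exact Finset.sum_nonneg fun i hi =>
          (hg i (Finset.mem_of_mem_erase (Finset.mem_filter.mp hi).1)).le


lemma countN [DecidableEq α] [DecidableEq β] (σ τ : ℕ) (U1 : Finset α) (V1 : Finset β)
    (u : α) (hu : u ∉ U1) (F W : Finset β)
    (hstrict : ∀ (U' : Finset α) (V' : Finset β), Disjoint U1 U' → Disjoint V1 V' → U'.Nonempty →
      ed G (U1 ∪ U') (V1 ∪ V') < ed G U1 V1 + τ * U'.card + σ * V'.card)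
    (hF : Disjoint V1 F) (hg : ∀ w ∈ F, ∑ x ∈ U1, ind G x w < σ) (hWV : W ⊆ V1)
    (hW : ∀ v ∈ W, ¬ G u v) (S : β → Finset α) (T : β → Finset β)
    (hTc : ∀ v ∈ W, (T v).card = τ) (hTs : ∀ v ∈ W, T v ⊆ V1 ∪ F)
    (hTu : ∀ v ∈ W, ∀ y ∈ T v, G u y) (hSc : ∀ v ∈ W, (S v).card = σ)
    (hSv : ∀ v ∈ W, ∀ x ∈ S v, G x v) (hST : ∀ v ∈ W, ∀ x ∈ S v, ∀ y ∈ T v, G x y) :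
    W.card ≤ F.card := by
  set g : β → ℤ := fun w => σ - ∑ x ∈ U1, ind G x w with hgdef
  have hu1 : ∑ y ∈ V1, ind G u y < τ := by
    have h := hstrict {u} ∅ (by simpa using hu) (by simp) (by simp)
    rw [ed_union_left _ (by simpa using hu)] at h
    simp only [Finset.union_empty, Finset.card_singleton, Finset.card_empty] at h
    have h2 : ed G {u} V1 = ∑ y ∈ V1, ind G u y := by simp [ed]
    rw [h2] at h
    push_cast at h
    linarith
  have hne : ∀ v ∈ W, (T v ∩ F).Nonempty := by
    intro v hv
    by_contra h
    rw [Finset.not_nonempty_iff_eq_empty] at h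
    have hsub : T v ⊆ V1 := by
      intro y hy
      rcases Finset.mem_union.mp (hTs v hv hy) with h1 | h1
      · exact h1
      · have : y ∈ T v ∩ F := Finset.mem_inter.mpr ⟨hy, h1⟩
        rw [h] at this
        simp at this
    have h3 := card_le_right hsub (hTu v hv)
    rw [hTc v hv] at h3
    linarith
  have hex : ∀ v : β, ∃ w : β, v ∈ W → (w ∈ T v ∩ F ∧ ∀ w' ∈ T v ∩ F, g w' ≤ g w) := by
    intro v
    by_cases hv : v ∈ W
    · obtain ⟨w, h1, h2⟩ := Finset.exists_max_image (T v ∩ F) g (hne v hv)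
      exact ⟨w, fun _ => ⟨h1, h2⟩⟩
    · exact ⟨v, fun h => absurd h hv⟩
  choose ω hω using hex
  have hgpos : ∀ w ∈ F, 0 < g w := by
    intro w hw
    have := hg w hw
    simp only [hgdef]
    linarith
  refine greedy (fun v => g (ω v)) g W.card W F rfl ?_ hgpos ?_
  · intro v hv
    exact hgpos _ (Finset.mem_inter.mp (hω v hv).1).2
  intro j
  set Vj := W.filter (fun v => g (ω v) ≤ j) with hVj
  set Fj := F.filter (fun w => g w ≤ j) with hFj
  by_cases hemp : Vj = ∅
  · rw [hemp, Finset.sum_empty]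
    exact Finset.sum_nonneg fun i hi => (hgpos i (Finset.mem_filter.mp hi).1).le
  obtain ⟨v1, hv1⟩ := Finset.nonempty_iff_ne_empty.mpr hemp
  have hVW : ∀ v ∈ Vj, v ∈ W := fun v hv => (Finset.mem_filter.mp hv).1
  set R := Vj.biUnion (fun v => S v \ U1) with hR
  have hRu : u ∉ R := by
    intro h
    obtain ⟨v, hv, hx⟩ := Finset.mem_biUnion.mp h
    exact hW v (hVW v hv) (hSv v (hVW v hv) u (Finset.mem_sdiff.mp hx).1)
  have hRU : Disjoint U1 R := by
    rw [Finset.disjoint_right]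
    intro x hx
    obtain ⟨v, hv, hx⟩ := Finset.mem_biUnion.mp hx
    exact (Finset.mem_sdiff.mp hx).2
  have hT' : ∀ v ∈ Vj, T v ⊆ V1 ∪ Fj := by
    intro v hv y hy
    rcases Finset.mem_union.mp (hTs v (hVW v hv) hy) with h1 | h1
    · exact Finset.mem_union_left _ h1
    · refine Finset.mem_union_right _ (Finset.mem_filter.mpr ⟨h1, ?_⟩)
      exact ((hω v (hVW v hv)).2 y (Finset.mem_inter.mpr ⟨hy, h1⟩)).trans
        (Finset.mem_filter.mp hv).2
  have hdU : Disjoint U1 (insert u R) := Finset.disjoint_insert_right.mpr ⟨hu, hRU⟩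
  have hdV : Disjoint V1 Fj := Finset.disjoint_of_subset_right (Finset.filter_subset _ _) hF
  have hs := hstrict (insert u R) Fj hdU hdV ⟨u, by simp⟩
  rw [ed_union_left _ hdU, ed_union_right _ hdV, Finset.card_insert_of_notMem hRu] at hs
  have e1 : ed G (insert u R) (V1 ∪ Fj) = ∑ y ∈ V1 ∪ Fj, ind G u y + ed G R (V1 ∪ Fj) := by
    unfold ed; rw [Finset.sum_insert hRu]
  have e2 : (τ : ℤ) ≤ ∑ y ∈ V1 ∪ Fj, ind G u y := by
    have := card_le_right (hT' v1 hv1) (hTu v1 (hVW v1 hv1))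
    rwa [hTc v1 (hVW v1 hv1)] at this
  have e3 : (τ : ℤ) * R.card + ed G R Vj ≤ ed G R (V1 ∪ Fj) := by
    have : (τ : ℤ) * R.card + ed G R Vj = ∑ x ∈ R, ((τ : ℤ) + ∑ y ∈ Vj, ind G x y) := by
      rw [Finset.sum_add_distrib]; simp [ed, mul_comm]
    rw [this]
    refine Finset.sum_le_sum fun x hx => ?_
    obtain ⟨v, hv, hx⟩ := Finset.mem_biUnion.mp hx
    have hdis : Disjoint (T v) Vj := by
      rw [Finset.disjoint_left]
      intro y hy hy2
      exact hW y (hVW y hy2) (hTu v (hVW v hv) y hy)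
    have hsub : T v ∪ Vj ⊆ V1 ∪ Fj := Finset.union_subset (hT' v hv)
      (fun y hy => Finset.mem_union_left _ (hWV (hVW y hy)))
    have h1 := mono_right (G := G) (x := x) hsub
    rw [Finset.sum_union hdis] at h1
    have h2 := card_le_right (G := G) (x := x) (Finset.Subset.refl (T v))
      (hST v (hVW v hv) x (Finset.mem_sdiff.mp hx).1)
    rw [hTc v (hVW v hv)] at h2
    linarith
  have e4 : ∑ v ∈ Vj, g (ω v) ≤ ed G R Vj := by
    rw [ed_comm]
    refine Finset.sum_le_sum fun v hv => ?_
    have hvW := hVW v hv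
    have h1 : ((S v \ U1).card : ℤ) ≤ ∑ x ∈ R, ind G x v :=
      card_le_left (fun x hx => Finset.mem_biUnion.mpr ⟨v, hv, hx⟩)
        (fun x hx => hSv v hvW x (Finset.mem_sdiff.mp hx).1)
    have h2 : ((S v ∩ U1).card : ℤ) ≤ ∑ x ∈ U1, ind G x (ω v) :=
      card_le_left Finset.inter_subset_right
        (fun x hx => hST v hvW x (Finset.mem_inter.mp hx).1 _ (Finset.mem_inter.mp (hω v hvW).1).1)
    have h3 := Finset.card_sdiff_add_card_inter (S v) U1
    rw [hSc v hvW] at h3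
    simp only [hgdef]
    have h4 : ((S v \ U1).card : ℤ) + ((S v ∩ U1).card : ℤ) = σ := by exact_mod_cast h3
    linarith
  have e5 : ∑ w ∈ Fj, g w = σ * Fj.card - ed G U1 Fj := by
    rw [ed_comm]; simp [hgdef, Finset.sum_sub_distrib, mul_comm]
  rw [e5]
  push_cast at hs
  nlinarith

section
variable [Fintype α] [Fintype β] [DecidableEq α] [DecidableEq β]

lemma cond_swap {σ τ : ℕ} (h : Cond G σ τ) : Cond (fun b a => G a b) σ τ := by
  intro v u huv
  obtain ⟨S, T, h1, h2, h3, h4⟩ := h u v huv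
  exact ⟨T, S, h2, h1, fun y hy x hx => h3 x hx y hy, by tauto⟩

lemma deg_ge {n σ τ : ℕ} (hα : Fintype.card α = n) (hστ : σ ≤ τ) (hn : τ < n)
    (h : Cond G σ τ) (v : β) : (σ : ℤ) ≤ ∑ x, ind G x v := by
  by_cases hv : ∃ u, ¬ G u v
  · obtain ⟨u, hu⟩ := hv
    obtain ⟨S, T, h1, h2, h3, h4⟩ := h u v hu
    have := card_le_left (Finset.subset_univ S) h1
    have : (σ : ℤ) ≤ S.card := by
      rcases h4 with h4 | h4 <;> exact_mod_cast (by omega)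
    linarith
  · push Not at hv
    have := card_le_left (Finset.subset_univ (univ : Finset α)) (fun x _ => hv x)
    rw [Finset.card_univ, hα] at this
    have : (σ : ℤ) ≤ n := by exact_mod_cast (by omega)
    linarith

lemma card_compl_int {γ : Type} [Fintype γ] [DecidableEq γ] {n : ℕ} (h : Fintype.card γ = n)
    (A : Finset γ) : (Aᶜ.card : ℤ) = n - A.card := by
  have := Finset.card_add_card_compl A
  rw [h] at this
  have h2 : (A.card : ℤ) + Aᶜ.card = n := by exact_mod_cast this
  linarith

open Classical in
lemma case0 {n σ τ : ℕ} (hα : Fintype.card α = n) (hβ : Fintype.card β = n) (hστ : σ ≤ τ)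
    (hn : τ < n) (h : Cond G σ τ) (v0 : β) (hv0 : ∑ x, ind G x v0 < τ) :
    ((σ : ℤ) + τ) * n - ((σ : ℤ) + τ) ^ 2 ≤ ed G univ univ := by
  set C : Finset α := univ.filter (fun x => G x v0) with hC
  have hCc : (C.card : ℤ) < τ := by
    rw [← sum_eq_card_right (G := fun b a => G a b) v0 univ]
    exact hv0
  set X : Finset β := univ.filter (fun v => (σ : ℤ) ≤ ∑ x ∈ C, ind G x v) with hX
  have h1 : (τ : ℤ) * Cᶜ.card ≤ ed G Cᶜ X := by
    refine ed_ge_left _ _ _ fun u hu => ?_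
    have huC : ¬ G u v0 := by simpa [hC] using hu
    obtain ⟨S, T, a1, a2, a3, a4⟩ := h u v0 huC
    have hSC : S ⊆ C := fun x hx => by simp [hC, a1 x hx]
    have hle : (S.card : ℤ) ≤ C.card := by exact_mod_cast Finset.card_le_card hSC
    rcases a4 with a4 | a4
    · have hT : T ⊆ X := by
        intro y hy
        simp only [hX, Finset.mem_filter, Finset.mem_univ, true_and]
        have := card_le_left hSC (fun x hx => a3 x hx y hy)
        rwa [a4.1] at this
      have := card_le_right hT a2
      rwa [a4.2] at this
    · rw [a4.1] at hle; omega
  have h2 : (σ : ℤ) * X.card ≤ ed G C X :=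
    ed_ge_right _ _ _ fun y hy => (Finset.mem_filter.mp hy).2
  have h3 : (σ : ℤ) * Xᶜ.card ≤ ed G univ Xᶜ :=
    ed_ge_right _ _ _ fun y hy => deg_ge hα hστ hn h y
  rw [ed_compl_right univ X, ed_compl_left C X]
  rw [card_compl_int hα] at h1
  rw [card_compl_int hβ] at h3
  have : (0 : ℤ) ≤ σ := by positivity
  have : (0 : ℤ) ≤ τ := by positivity
  nlinarith

lemma ext_left {A : Finset α} {B : Finset β} {ρ κ : ℤ}
    (hmax : ∀ A' B', A ⊆ A' → B ⊆ B' →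
      ed G A B - ρ * A.card - κ * B.card ≤ ed G A' B' - ρ * A'.card - κ * B'.card →
      A' = A ∧ B' = B) (z : α) (hz : z ∉ A) : ∑ y ∈ B, ind G z y < ρ := by
  by_contra hcon
  push Not at hcon
  have h := (hmax (insert z A) B (Finset.subset_insert _ _) (Finset.Subset.refl _) (by
    have : ed G (insert z A) B = ∑ y ∈ B, ind G z y + ed G A B := by
      unfold ed; rw [Finset.sum_insert hz]
    rw [this, Finset.card_insert_of_notMem hz]
    push_cast
    linarith)).1
  exact hz (h ▸ Finset.mem_insert_self z A)

lemma ext_right {A : Finset α} {B : Finset β} {ρ κ : ℤ}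
    (hmax : ∀ A' B', A ⊆ A' → B ⊆ B' →
      ed G A B - ρ * A.card - κ * B.card ≤ ed G A' B' - ρ * A'.card - κ * B'.card →
      A' = A ∧ B' = B) (z : β) (hz : z ∉ B) : ∑ x ∈ A, ind G x z < κ := by
  by_contra hcon
  push Not at hcon
  have h := (hmax A (insert z B) (Finset.Subset.refl _) (Finset.subset_insert _ _) (by
    have : ed G A (insert z B) = ∑ x ∈ A, ind G x z + ed G A B := by
      rw [ed_comm, ed_comm, Finset.sum_insert hz]
    rw [this, Finset.card_insert_of_notMem hz]
    push_cast
    linarith)).2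
  exact hz (h ▸ Finset.mem_insert_self z B)

open Classical in
set_option maxHeartbeats 1000000 in
lemma main {n σ τ : ℕ} (hα : Fintype.card α = n) (hβ : Fintype.card β = n) (hστ : σ ≤ τ)
    (h : Cond G σ τ) (hL : ∀ x, (τ : ℤ) ≤ ∑ y, ind G x y) (hR : ∀ y, (τ : ℤ) ≤ ∑ x, ind G x y) :
    ((σ : ℤ) + τ) * n - ((σ : ℤ) + τ) ^ 2 ≤ ed G univ univ := by
  have hσ0 : (0 : ℤ) ≤ σ := by positivity
  have hτ0 : (0 : ℤ) ≤ τ := by positivity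
  have hστ' : (σ : ℤ) ≤ τ := by exact_mod_cast hστ
  by_cases hall : ∀ v, ((σ : ℤ) + τ) ≤ ∑ x, ind G x v
  · have := ed_ge_right (G := G) univ univ _ (fun y _ => hall y)
    rw [Finset.card_univ, hβ] at this
    nlinarith
  push Not at hall
  obtain ⟨v0, hv0⟩ := hall
  set C : Finset α := univ.filter (fun x => G x v0) with hC
  have hCc : (C.card : ℤ) < σ + τ := by
    rw [← sum_eq_card_right (G := fun b a => G a b) v0 univ]
    exact hv0
  obtain ⟨U1, V1, hCU, -, hmx1, hst1⟩ := max_pair (G := G) C ∅ (τ : ℤ) (σ : ℤ)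
  have hψ1 : -(τ : ℤ) * C.card ≤ ed G U1 V1 - τ * U1.card - σ * V1.card := by
    have := hmx1 C ∅ (Finset.Subset.refl _) (Finset.Subset.refl _)
    have e0 : ed G C ∅ = 0 := by simp [ed]
    rw [e0] at this
    simp only [Finset.card_empty] at this
    push_cast at this
    linarith
  have fa := ext_left hst1
  have fb := ext_right hst1
  have fc : ∀ v, (σ : ℤ) ≤ ∑ x ∈ C, ind G x v → v ∈ V1 := by
    intro v hv
    by_contra hcon
    have h1 := fb v hcon
    have h2 := mono_left (G := G) (y := v) hCU
    linarith
  have fd : ∀ u, u ∉ U1 → ∃ (S : Finset α) (T : Finset β), S ⊆ C ∧ T ⊆ V1 ∧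
      (∀ y ∈ T, G u y) ∧ (∀ x ∈ S, ∀ y ∈ T, G x y) ∧ S.card = τ ∧ T.card = σ := by
    intro u hu
    have huC : ¬ G u v0 := by
      intro hG
      exact hu (hCU (by simp [hC, hG]))
    obtain ⟨S, T, a1, a2, a3, a4⟩ := h u v0 huC
    have hSC : S ⊆ C := fun x hx => by simp [hC, a1 x hx]
    have hTV : T ⊆ V1 := by
      intro y hy
      apply fc
      have h1 := card_le_left hSC (fun x hx => a3 x hx y hy)
      have : (σ : ℤ) ≤ S.card := by
        rcases a4 with a4 | a4 <;> exact_mod_cast (by omega)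
      linarith
    rcases a4 with a4 | a4
    · have h1 := card_le_right hTV a2
      have h2 := fa u hu
      rw [a4.2] at h1
      linarith
    · exact ⟨S, T, hSC, hTV, a2, a3, a4⟩
  have fe : ∀ z ∈ U1, z ∉ C → (τ : ℤ) ≤ ∑ y ∈ V1, ind G z y := by
    intro z hz hzC
    have h1 := hmx1 (U1.erase z) V1 (fun x hx => Finset.mem_erase.mpr
      ⟨fun hxz => hzC (hxz ▸ hx), hCU hx⟩) (Finset.empty_subset _)
    have e0 : ed G U1 V1 = ∑ y ∈ V1, ind G z y + ed G (U1.erase z) V1 := by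
      unfold ed; rw [Finset.add_sum_erase U1 (fun x => ∑ y ∈ V1, ind G x y) hz]
    have e1 : ((U1.erase z).card : ℤ) = U1.card - 1 := by
      have := Finset.card_erase_add_one hz
      have h2 : ((U1.erase z).card : ℤ) + 1 = U1.card := by exact_mod_cast this
      linarith
    rw [e0, e1] at h1
    linarith
  have cU2 := card_compl_int hα U1
  have cV2 := card_compl_int hβ V1
  have hU2V1 : (σ : ℤ) * U1ᶜ.card ≤ ed G U1ᶜ V1 := by
    refine ed_ge_left _ _ _ fun u hu => ?_
    obtain ⟨S, T, -, b2, b3, -, -, b6⟩ := fd u (by simpa using hu)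
    have := card_le_right b2 b3
    rwa [b6] at this
  by_cases hall2 : ∀ u, u ∉ U1 → ((σ : ℤ) + τ) ≤ ∑ y, ind G u y
  · have h1 : ((σ : ℤ) + τ) * U1ᶜ.card ≤ ed G U1ᶜ univ :=
      ed_ge_left _ _ _ fun u hu => hall2 u (by simpa using hu)
    by_cases hc : V1ᶜ.card < U1ᶜ.card
    · have h2 := ed_nonneg (G := G) U1 V1ᶜ
      rw [ed_compl_left U1 univ, ed_compl_right U1 V1]
      have hc' : (V1ᶜ.card : ℤ) < U1ᶜ.card := by exact_mod_cast hc
      nlinarith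
    · have hc' : (U1ᶜ.card : ℤ) ≤ V1ᶜ.card := by exact_mod_cast (by omega)
      have h3 : (τ : ℤ) * V1ᶜ.card ≤ ed G univ V1ᶜ := ed_ge_right _ _ _ fun y _ => hR y
      rw [ed_compl_right univ V1, ed_compl_left U1 V1]
      nlinarith
  push Not at hall2
  obtain ⟨u, huU, hud⟩ := hall2
  by_cases hc : (U1ᶜ.card : ℤ) ≤ V1ᶜ.card
  · have h3 : (τ : ℤ) * V1ᶜ.card ≤ ed G univ V1ᶜ := ed_ge_right _ _ _ fun y _ => hR y
    rw [ed_compl_right univ V1, ed_compl_left U1 V1]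
    nlinarith
  set D : Finset β := univ.filter (fun y => G u y) with hD
  have hDc : (D.card : ℤ) < σ + τ := by
    rw [← sum_eq_card_right (G := G) u univ]
    exact hud
  obtain ⟨S0, T0, s1, s2, s3, s4, s5, s6⟩ := fd u huU
  have hT0D : T0 ⊆ D := fun y hy => by simp [hD, s3 y hy]
  have hCD : (σ : ℤ) * τ ≤ ed G C D := by
    have h1 : (τ : ℤ) * T0.card ≤ ed G C T0 := by
      refine ed_ge_right _ _ _ fun y hy => ?_
      have := card_le_left s1 (fun x hx => s4 x hx y hy)
      rwa [s5] at this
    have h2 : ed G C T0 ≤ ed G C D := Finset.sum_le_sum fun x _ => mono_right hT0D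
    rw [s6] at h1
    nlinarith
  obtain ⟨A, B, hCA, hDB, hmx2, hst2⟩ := max_pair (G := G) C D (σ : ℤ) (τ : ℤ)
  have hψ2 := hmx2 C D (Finset.Subset.refl _) (Finset.Subset.refl _)
  have ga := ext_left hst2
  have gb := ext_right hst2
  have hUA : ∀ x, x ∉ A → x ∈ U1 := by
    intro x hx
    by_contra hxU
    obtain ⟨S, T, b1, b2, b3, b4, b5, b6⟩ := fd x hxU
    have hTB : T ⊆ B := by
      intro y hy
      by_contra hyB
      have h1 := gb y hyB
      have h2 := card_le_left (b1.trans hCA) (fun x hx => b4 x hx y hy)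
      rw [b5] at h2
      linarith
    have h1 := ga x hx
    have h2 := card_le_right hTB b3
    rw [b6] at h2
    linarith
  have hvB : ∀ v, v ∉ B → ∃ (S : Finset α) (T : Finset β), S ⊆ A ∧ T ⊆ D ∧
      (∀ x ∈ S, G x v) ∧ (∀ y ∈ T, G u y) ∧ (∀ x ∈ S, ∀ y ∈ T, G x y) ∧
      S.card = σ ∧ T.card = τ := by
    intro v hv
    have huv : ¬ G u v := fun hG => hv (hDB (by simp [hD, hG]))
    obtain ⟨S, T, a1, a2, a3, a4⟩ := h u v huv
    have hTD : T ⊆ D := fun y hy => by simp [hD, a2 y hy]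
    have hSA : S ⊆ A := by
      intro x hx
      by_contra hxA
      have h1 := ga x hxA
      have h2 := card_le_right (hTD.trans hDB) (fun y hy => a3 x hx y hy)
      have : (σ : ℤ) ≤ T.card := by
        rcases a4 with a4 | a4 <;> exact_mod_cast (by omega)
      linarith
    rcases a4 with a4 | a4
    · exact ⟨S, T, hSA, hTD, a1, a2, a3, a4⟩
    · have h1 := gb v hv
      have h2 := card_le_left hSA a1
      rw [a4.1] at h2
      linarith
  have hex : ∀ v, ∃ (S : Finset α) (T : Finset β), v ∉ B → (S ⊆ A ∧ T ⊆ D ∧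
      (∀ x ∈ S, G x v) ∧ (∀ y ∈ T, G u y) ∧ (∀ x ∈ S, ∀ y ∈ T, G x y) ∧
      S.card = σ ∧ T.card = τ) := by
    intro v
    by_cases hv : v ∈ B
    · exact ⟨∅, ∅, fun h => absurd hv h⟩
    · obtain ⟨S, T, hh⟩ := hvB v hv
      exact ⟨S, T, fun _ => hh⟩
  choose S T hSTv using hex
  set W := Bᶜ ∩ V1 with hWdef
  have hWB : ∀ v ∈ W, v ∉ B := fun v hv => by
    simpa using (Finset.mem_inter.mp hv).1
  have hcount : W.card ≤ (D \ V1).card := by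
    refine countN (G := G) σ τ U1 V1 u huU (D \ V1) W ?_ Finset.disjoint_sdiff ?_
      Finset.inter_subset_right ?_ S T ?_ ?_ ?_ ?_ ?_ ?_
    · intro U' V' d1 d2 hne
      by_contra hcon
      push Not at hcon
      have h1 := (hst1 (U1 ∪ U') (V1 ∪ V') Finset.subset_union_left Finset.subset_union_left (by
        rw [Finset.card_union_of_disjoint d1, Finset.card_union_of_disjoint d2]
        push_cast
        linarith)).1
      obtain ⟨x, hx⟩ := hne
      have : x ∈ U1 := h1 ▸ Finset.mem_union_right _ hx
      exact Finset.disjoint_left.mp d1 this hx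
    · intro w hw
      exact fb w (Finset.mem_sdiff.mp hw).2
    · intro v hv hG
      exact hWB v hv (hDB (by simp [hD, hG]))
    · exact fun v hv => (hSTv v (hWB v hv)).2.2.2.2.2.2
    · intro v hv y hy
      have := (hSTv v (hWB v hv)).2.1 hy
      rw [Finset.union_sdiff_self_eq_union]
      exact Finset.mem_union_right _ this
    · exact fun v hv => (hSTv v (hWB v hv)).2.2.2.1
    · exact fun v hv => (hSTv v (hWB v hv)).2.2.2.2.2.1
    · exact fun v hv => (hSTv v (hWB v hv)).2.2.1
    · exact fun v hv => (hSTv v (hWB v hv)).2.2.2.2.1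
  have hN : (W.card : ℤ) ≤ τ := by
    have h1 := Finset.card_sdiff_add_card_inter D V1
    have h2 : T0.card ≤ (D ∩ V1).card :=
      Finset.card_le_card (Finset.subset_inter hT0D s2)
    rw [s6] at h2
    have h3 : D.card < σ + τ := by exact_mod_cast hDc
    exact_mod_cast (by omega)
  have cA := card_compl_int hα A
  have cB := card_compl_int hβ B
  have cW : (Bᶜ.card : ℤ) = W.card + (Bᶜ \ V1).card := by
    have := Finset.card_sdiff_add_card_inter Bᶜ V1
    have h2 : ((Bᶜ \ V1).card : ℤ) + (Bᶜ ∩ V1).card = Bᶜ.card := by exact_mod_cast this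
    linarith
  have hi : ed G A B + τ * Bᶜ.card ≤ ed G univ univ := by
    rw [ed_compl_right univ B, ed_compl_left A B]
    have h1 : (τ : ℤ) * Bᶜ.card ≤ ed G univ Bᶜ := ed_ge_right _ _ _ fun y _ => hR y
    have h2 := ed_nonneg (G := G) Aᶜ B
    linarith
  have hii : ed G A B + τ * (Bᶜ \ V1).card + τ * Aᶜ.card + σ * W.card ≤ ed G univ univ := by
    have k1 : (τ : ℤ) * (Bᶜ \ V1).card ≤ ed G univ (Bᶜ \ V1) :=
      ed_ge_right _ _ _ fun y _ => hR y
    have k2 : (σ : ℤ) * W.card ≤ ed G A W := by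
      refine ed_ge_right _ _ _ fun v hv => ?_
      have hh := hSTv v (hWB v hv)
      have := card_le_left hh.1 hh.2.2.1
      rwa [hh.2.2.2.2.2.1] at this
    have k3 : (τ : ℤ) * Aᶜ.card ≤ ed G Aᶜ (B ∪ W) := by
      refine ed_ge_left _ _ _ fun z hz => ?_
      have hzA : z ∉ A := by simpa using hz
      have h1 := fe z (hUA z hzA) (fun hzC => hzA (hCA hzC))
      refine h1.trans (mono_right ?_)
      intro y hy
      by_cases hyB : y ∈ B
      · exact Finset.mem_union_left _ hyB
      · exact Finset.mem_union_right _ (Finset.mem_inter.mpr ⟨by simpa using hyB, hy⟩)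
    have dBW : Disjoint B W := by
      rw [Finset.disjoint_right]; exact hWB
    rw [ed_union_right _ dBW] at k3
    have k4 : ed G univ Bᶜ = ed G univ (Bᶜ \ V1) + ed G univ W := by
      rw [← ed_union_right _ (Finset.disjoint_sdiff_inter Bᶜ V1), Finset.sdiff_union_inter]
    rw [ed_compl_right univ B, k4, ed_compl_left A B, ed_compl_left A W]
    linarith
  have hq0 : (0 : ℤ) ≤ Aᶜ.card := by positivity
  have p1 : (σ : ℤ) * C.card ≤ σ * (σ + τ) := mul_le_mul_of_nonneg_left hCc.le hσ0
  have p2 : (τ : ℤ) * D.card ≤ τ * (σ + τ) := mul_le_mul_of_nonneg_left hDc.le hτ0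
  by_cases hqN : (Aᶜ.card : ℤ) ≤ W.card
  · have p3 : (σ : ℤ) * Aᶜ.card ≤ σ * τ := mul_le_mul_of_nonneg_left (hqN.trans hN) hσ0
    nlinarith
  · push Not at hqN
    have p4 : (0 : ℤ) ≤ (τ - σ) * (Aᶜ.card - W.card) :=
      mul_nonneg (by linarith) (by linarith)
    have p5 : (0 : ℤ) ≤ σ * τ := mul_nonneg hσ0 hτ0
    have e1 : (A.card : ℤ) = n - Aᶜ.card := by linarith
    have e2 : (B.card : ℤ) = n - W.card - (Bᶜ \ V1).card := by linarith
    rw [e1, e2] at hψ2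
    nlinarith

end
end
end KSat

namespace KSat

lemma half_cond {n s t : ℕ} (hs : 1 ≤ s) (ht : 1 ≤ t) (E : Finset (Fin n × Fin n))
    (hfree : ¬ containsK E s t) (u v : Fin n) (h : containsK (insert (u, v) E) s t) :
    ∃ (S T : Finset (Fin n)), (∀ x ∈ S, (x, v) ∈ E) ∧ (∀ y ∈ T, (u, y) ∈ E) ∧
    (∀ x ∈ S, ∀ y ∈ T, (x, y) ∈ E) ∧ S.card = s - 1 ∧ T.card = t - 1 := by
  obtain ⟨S, T, hS, hT, hE⟩ := h
  have huS : u ∈ S := by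
    by_contra hu
    refine hfree ⟨S, T, hS, hT, fun x hx y hy => ?_⟩
    rcases Finset.mem_insert.mp (hE x hx y hy) with h1 | h1
    · exact absurd (by rw [← show x = u from (Prod.ext_iff.mp h1).1]; exact hx) hu
    · exact h1
  have hvT : v ∈ T := by
    by_contra hv
    refine hfree ⟨S, T, hS, hT, fun x hx y hy => ?_⟩
    rcases Finset.mem_insert.mp (hE x hx y hy) with h1 | h1
    · exact absurd (by rw [← show y = v from (Prod.ext_iff.mp h1).2]; exact hy) hv
    · exact h1
  refine ⟨S.erase u, T.erase v, ?_, ?_, ?_, ?_, ?_⟩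
  · intro x hx
    rw [Finset.mem_erase] at hx
    rcases Finset.mem_insert.mp (hE x hx.2 v hvT) with h1 | h1
    · exact absurd (Prod.ext_iff.mp h1).1 hx.1
    · exact h1
  · intro y hy
    rw [Finset.mem_erase] at hy
    rcases Finset.mem_insert.mp (hE u huS y hy.2) with h1 | h1
    · exact absurd (Prod.ext_iff.mp h1).2 hy.1
    · exact h1
  · intro x hx y hy
    rw [Finset.mem_erase] at hx hy
    rcases Finset.mem_insert.mp (hE x hx.2 y hy.2) with h1 | h1
    · exact absurd (Prod.ext_iff.mp h1).1 hx.1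
    · exact h1
  · rw [Finset.card_erase_of_mem huS, hS]
  · rw [Finset.card_erase_of_mem hvT, hT]

lemma card_eq_ed {n : ℕ} (E : Finset (Fin n × Fin n)) :
    (E.card : ℤ) = ed (fun u v => (u, v) ∈ E) univ univ := by
  unfold ed ind
  rw [← Finset.sum_product', Finset.univ_product_univ]
  simp

end KSat

theorem stmt3 (n s t : ℕ) (hs : 1 ≤ s) (hst : s ≤ t) (htn : t ≤ n)
    (E : Finset (Fin n × Fin n)) (hsat : Saturated s t E) :
    (n : ℤ) * (s + t - 2 : ℕ) - ((s + t - 2 : ℕ) : ℤ) ^ 2 ≤ (E.card : ℤ) := by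
  obtain ⟨hfree, hadd⟩ := hsat
  push Not at hfree
  have hcond : KSat.Cond (fun u v : Fin n => (u, v) ∈ E) (s - 1) (t - 1) := by
    intro u v huv
    rcases hadd u v huv with h | h
    · obtain ⟨S, T, h1, h2, h3, h4⟩ := KSat.half_cond hs (hs.trans hst) E hfree.1 u v h
      exact ⟨S, T, h1, h2, h3, Or.inl h4⟩
    · obtain ⟨S, T, h1, h2, h3, h4⟩ := KSat.half_cond (hs.trans hst) hs E hfree.2 u v h
      exact ⟨S, T, h1, h2, h3, Or.inr h4⟩
  have hcard : Fintype.card (Fin n) = n := Fintype.card_fin n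
  have key : (((s - 1 : ℕ) : ℤ) + (t - 1 : ℕ)) * n - (((s - 1 : ℕ) : ℤ) + (t - 1 : ℕ)) ^ 2
      ≤ KSat.ed (fun u v : Fin n => (u, v) ∈ E) univ univ := by
    by_cases hR : ∀ y, ((t - 1 : ℕ) : ℤ) ≤ ∑ x, KSat.ind (fun u v : Fin n => (u, v) ∈ E) x y
    · by_cases hL : ∀ x, ((t - 1 : ℕ) : ℤ) ≤ ∑ y, KSat.ind (fun u v : Fin n => (u, v) ∈ E) x y
      · exact KSat.main hcard hcard (by omega) hcond hL hR
      · push Not at hL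
        obtain ⟨u, hu⟩ := hL
        have := KSat.case0 hcard hcard (by omega) (by omega) (KSat.cond_swap hcond) u hu
        rw [KSat.ed_comm] at this
        exact this
    · push Not at hR
      obtain ⟨v, hv⟩ := hR
      exact KSat.case0 hcard hcard (by omega) (by omega) hcond v hv
  rw [KSat.card_eq_ed]
  have e : ((s + t - 2 : ℕ) : ℤ) = ((s - 1 : ℕ) : ℤ) + (t - 1 : ℕ) := by
    have : s + t - 2 = (s - 1) + (t - 1) := by omega
    rw [this]; push_cast; ring
  rw [e]
  linarith
end

section
/- Let G be a bipartite graph with parts U, U' of size n, minimum degree at least t-1, and suppose there exist sets A₀ ⊆ U, A₀' ⊆ U' and vertices u₀ ∈ A₀, u₀' ∈ A₀' with N(u₀) ⊆ A₀' and N(u₀') ⊆ A₀, and suppose G is K_{s,t}-saturated. If e denotes the number of edges between A₀ and A₀', and A ⊇ A₀, A' ⊇ A₀' are obtained by iteratively adding vertices with at least t-1 neighbors in the current set, then G has at least n(s+t-2) - (|A₀|+|A₀'|)(t-1) - ⌊(s-1)²/4⌋ + e + min{(t-s)|A|, (t-s)|A'|} edges. -/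
open Finset

section helpers
open Classical

noncomputable def cnt {α β : Type} (R : α → β → Prop) (X : Finset β) (u : α) : ℕ :=
  (X.filter (R u)).card

theorem cnt_mono {α β : Type} (R : α → β → Prop) {X Y : Finset β} (h : X ⊆ Y) (u : α) :
    cnt R X u ≤ cnt R Y u := card_le_card (filter_subset_filter _ h)

theorem cnt_union_disj {α β : Type} (R : α → β → Prop) {X Y Z : Finset β} (hX : X ⊆ Z)
    (hY : Y ⊆ Z) (hd : Disjoint X Y) (u : α) : cnt R X u + cnt R Y u ≤ cnt R Z u := by
  unfold cnt
  rw [← card_union_of_disjoint (disjoint_filter_filter hd), ← filter_union]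
  exact card_le_card (filter_subset_filter _ (union_subset hX hY))

theorem le_cnt {α β : Type} (R : α → β → Prop) {X T : Finset β} {u : α} (h : T ⊆ X)
    (hR : ∀ v ∈ T, R u v) : T.card ≤ cnt R X u := by
  apply card_le_card
  intro v hv
  exact mem_filter.2 ⟨h hv, hR v hv⟩

theorem sum_cnt_comm {α β : Type} (R : α → β → Prop) (X : Finset α) (Y : Finset β) :
    ∑ u ∈ X, cnt R Y u = ∑ v ∈ Y, cnt (flip R) X v := by
  have := sum_card_bipartiteAbove_eq_sum_card_bipartiteBelow (s := X) (t := Y) R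
  exact this

variable {α β : Type} [Fintype α] [Fintype β] [DecidableEq α] [DecidableEq β]

noncomputable def setP {α β : Type} [Fintype α] (R : α → β → Prop) (A : Finset α) (A' : Finset β)
    (k : ℕ) : Finset α := univ.filter fun u => u ∈ A ∨ k ≤ cnt R A' u

noncomputable def setZ {α β : Type} [Fintype α] [Fintype β] (R : α → β → Prop) (A : Finset α)
    (A' : Finset β) (k d : ℕ) : Finset α :=
  univ.filter fun u => u ∉ A ∧ d ≤ cnt R (setP (flip R) A' A k) u

noncomputable def setY {α β : Type} [Fintype α] [Fintype β] (R : α → β → Prop) (A : Finset α)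
    (A' : Finset β) (k d : ℕ) : Finset α :=
  univ.filter fun u => u ∉ setP R A A' k ∧ cnt R A' u + cnt R (setZ (flip R) A' A k d) u < k

theorem deficit (R : α → β → Prop) (A : Finset α) (A' : Finset β) (k d : ℕ)
    (hdeg : ∀ v, d ≤ cnt (flip R) univ v) :
    k * Aᶜ.card + d * A'ᶜ.card ≤ ∑ u ∈ Aᶜ, cnt R A' u + ∑ v ∈ A'ᶜ, cnt (flip R) univ v
      + ∑ u ∈ setY R A A' k d, (k - cnt R (setZ (flip R) A' A k d) u) := by
  set M := (setP R A A' k)ᶜ with hM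
  set Z' := setZ (flip R) A' A k d with hZ'
  have hMA : M ⊆ Aᶜ := by
    intro u hu
    simp only [hM, setP, mem_compl, mem_filter, mem_univ, true_and, not_or] at hu ⊢
    exact hu.1
  have hYM : setY R A A' k d ⊆ M := by
    intro u hu
    simp only [setY, mem_filter] at hu
    simpa [hM] using hu.2.1
  have hZA : Z' ⊆ A'ᶜ := by
    intro u hu
    simp only [hZ', setZ, mem_compl, mem_filter] at hu ⊢
    exact hu.2.1
  have h1 : ∑ v ∈ A'ᶜ, (d + if v ∈ Z' then cnt (flip R) M v else 0)
      ≤ ∑ v ∈ A'ᶜ, cnt (flip R) univ v := by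
    apply sum_le_sum
    intro v _
    split_ifs with hv
    · have h2 : d ≤ cnt (flip R) (setP R A A' k) v := by
        simp only [hZ', setZ, mem_filter] at hv
        exact hv.2.2
      have := cnt_union_disj (flip R) (subset_univ (setP R A A' k)) (subset_univ M)
        disjoint_compl_right v
      omega
    · simpa using hdeg v
  have h2 : ∑ u ∈ Aᶜ, k ≤ ∑ u ∈ Aᶜ, (cnt R A' u + (if u ∈ M then cnt R Z' u else 0)
      + if u ∈ setY R A A' k d then k - cnt R Z' u else 0) := by
    apply sum_le_sum
    intro u hu
    by_cases hm : u ∈ M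
    · by_cases hy : u ∈ setY R A A' k d
      · simp only [hm, hy, if_true]; omega
      · simp only [hm, hy, if_true, if_false]
        have : ¬ (cnt R A' u + cnt R Z' u < k) := by
          intro h
          apply hy
          simp only [setY, mem_filter, mem_univ, true_and]
          exact ⟨by simpa [hM] using hm, h⟩
        omega
    · have : u ∈ setP R A A' k := by simpa [hM] using hm
      simp only [setP, mem_filter, mem_univ, true_and] at this
      rcases this with h | h
      · exact absurd h (by simpa using hu)
      · omega
  have e1 : ∑ v ∈ A'ᶜ, (if v ∈ Z' then cnt (flip R) M v else 0) = ∑ v ∈ Z', cnt (flip R) M v := by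
    rw [sum_ite_mem, inter_eq_right.2 hZA]
  have e2 : ∑ u ∈ Aᶜ, (if u ∈ M then cnt R Z' u else 0) = ∑ u ∈ M, cnt R Z' u := by
    rw [sum_ite_mem, inter_eq_right.2 hMA]
  have e3 : ∑ u ∈ Aᶜ, (if u ∈ setY R A A' k d then k - cnt R Z' u else 0)
      = ∑ u ∈ setY R A A' k d, (k - cnt R Z' u) := by
    rw [sum_ite_mem, inter_eq_right.2 (hYM.trans hMA)]
  have e4 := sum_cnt_comm R M Z'
  rw [sum_add_distrib, e1, sum_const, smul_eq_mul] at h1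
  rw [sum_add_distrib, sum_add_distrib, e2, e3, sum_const, smul_eq_mul] at h2
  rw [mul_comm k, mul_comm d]
  omega

theorem type_one (R : α → β → Prop) (A : Finset α) (A' : Finset β) (k d : ℕ)
    (hM : ∀ u, u ∉ setP R A A' k → d ≤ cnt R (setP (flip R) A' A k) u)
    (hM' : ∀ v, v ∉ setP (flip R) A' A k → d ≤ cnt (flip R) (setP R A A' k) v)
    (u : α) (v : β) (hu : u ∈ setY R A A' k d) (hv : v ∈ setY (flip R) A' A k d)
    (S : Finset α) (T : Finset β) (hS : S.card = k) (hT : T.card = d)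
    (hST : ∀ x ∈ S, ∀ y ∈ T, R x y) (hSv : ∀ x ∈ S, R x v) (huT : ∀ y ∈ T, R u y) : False := by
  simp only [setY, mem_filter, mem_univ, true_and] at hu hv
  obtain ⟨_, hu⟩ := hu
  obtain ⟨_, hv⟩ := hv
  change cnt (flip R) A v + cnt (flip R) (setZ R A A' k d) v < k at hv
  set Z := setZ R A A' k d with hZ
  set Z' := setZ (flip R) A' A k d with hZ'
  have hex : ∃ w ∈ S, w ∉ A ∧ w ∉ Z := by
    by_contra! hcon
    have hsub : S ⊆ (A.filter (flip R v)) ∪ (Z.filter (flip R v)) := by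
      intro w hw
      by_cases hwA : w ∈ A
      · exact mem_union_left _ (mem_filter.2 ⟨hwA, hSv w hw⟩)
      · exact mem_union_right _ (mem_filter.2 ⟨hcon w hw hwA, hSv w hw⟩)
    have := (card_le_card hsub).trans (card_union_le _ _)
    unfold cnt at hv
    omega
  obtain ⟨w, hwS, hwA, hwZ⟩ := hex
  have hw1 : ¬ d ≤ cnt R (setP (flip R) A' A k) w := by
    intro h
    apply hwZ
    simp only [hZ, setZ, mem_filter, mem_univ, true_and]
    exact ⟨hwA, h⟩
  have hwP : w ∈ setP R A A' k := by
    by_contra h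
    exact hw1 (hM w h)
  have hwk : k ≤ cnt R A' w := by
    simp only [setP, mem_filter, mem_univ, true_and] at hwP
    tauto
  set Q := T.filter fun y => y ∉ A' ∧ y ∉ Z' with hQ
  have hTle : T.card ≤ cnt R A' u + cnt R Z' u + Q.card := by
    have hsub : T ⊆ ((A'.filter (R u)) ∪ (Z'.filter (R u))) ∪ Q := by
      intro y hy
      have := huT y hy
      simp only [mem_union, mem_filter, hQ]
      tauto
    have h1 := (card_le_card hsub).trans (card_union_le _ _)
    have h2 := card_union_le (A'.filter (R u)) (Z'.filter (R u))
    unfold cnt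
    omega
  have hQP : Q ⊆ setP (flip R) A' A k := by
    intro y hy
    simp only [hQ, mem_filter] at hy
    by_contra h
    apply hy.2.2
    simp only [hZ', setZ, mem_filter, mem_univ, true_and]
    exact ⟨hy.2.1, hM' y h⟩
  have hAP : A' ⊆ setP (flip R) A' A k := by
    intro y hy
    simp only [setP, mem_filter, mem_univ, true_and]
    exact Or.inl hy
  have hdis : Disjoint A' Q := by
    rw [disjoint_left]
    intro y hy hyQ
    simp only [hQ, mem_filter] at hyQ
    exact hyQ.2.1 hy
  have h3 := cnt_union_disj R hAP hQP hdis w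
  have h4 : Q.card ≤ cnt R Q w := le_cnt R (Subset.refl _)
    (fun y hy => hST w hwS y (mem_filter.1 hy).1)
  omega

/-- Bound of the sum over `setY`. -/
theorem sumY (R : α → β → Prop) (A : Finset α) (A' : Finset β) (k d : ℕ)
    (hM' : ∀ v, v ∉ setP (flip R) A' A k → d ≤ cnt (flip R) (setP R A A' k) v)
    (hc : ∀ u ∈ setY R A A' k d, ∀ v ∈ setY (flip R) A' A k d, R u v) :
    ∑ u ∈ setY R A A' k d, (k - cnt R (setZ (flip R) A' A k d) u)
      ≤ (setY R A A' k d).card * (k - (setY (flip R) A' A k d).card) := by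
  rw [← smul_eq_mul, ← sum_const]
  apply sum_le_sum
  intro u hu
  have : (setY (flip R) A' A k d).card ≤ cnt R (setZ (flip R) A' A k d) u := by
    apply le_cnt R _ (hc u hu)
    intro v hv
    simp only [setY, mem_filter, mem_univ, true_and] at hv
    simp only [setZ, mem_filter, mem_univ, true_and]
    refine ⟨fun h => hv.1 ?_, hM' v hv.1⟩
    simp only [setP, mem_filter, mem_univ, true_and]
    exact Or.inl h
  omega

theorem min_bound (k y y' : ℕ) : y * (k - y') ≤ k ^ 2 / 4 ∨ y' * (k - y) ≤ k ^ 2 / 4 := by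
  have key : ∀ a b : ℕ, a ≤ b → a * (k - b) ≤ k ^ 2 / 4 := by
    intro a b hab
    rw [Nat.le_div_iff_mul_le (by norm_num)]
    rcases le_total k b with h | h
    · simp [Nat.sub_eq_zero_of_le h]
    · obtain ⟨c, rfl⟩ := Nat.exists_eq_add_of_le h
      simp only [Nat.add_sub_cancel_left]
      zify at hab ⊢
      nlinarith [sq_nonneg ((b : ℤ) - c), mul_le_mul_of_nonneg_right hab (Int.natCast_nonneg c)]
  rcases le_total y y' with h | h
  · exact Or.inl (key _ _ h)
  · exact Or.inr (key _ _ h)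

/-- Vertices not in `setP` have at least `d` neighbours in the other `setP`. -/
theorem outside (R : α → β → Prop) (A : Finset α) (A' : Finset β) (k d : ℕ) (v₀ : β)
    (hv₀ : ∀ u, R u v₀ → u ∈ A)
    (hcl : ∀ v, v ∉ A' → cnt (flip R) A v < d)
    (hsat : ∀ u v, ¬ R u v → ∃ (S : Finset α) (T : Finset β),
      ((S.card = k ∧ T.card = d) ∨ (S.card = d ∧ T.card = k)) ∧
      (∀ x ∈ S, ∀ y ∈ T, R x y) ∧ (∀ x ∈ S, R x v) ∧ (∀ y ∈ T, R u y)) :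
    ∀ u, u ∉ setP R A A' k → d ≤ cnt R (setP (flip R) A' A k) u := by
  intro u hu
  simp only [setP, mem_filter, mem_univ, true_and, not_or, not_le] at hu
  obtain ⟨S, T, hc, hST, hS, hT⟩ := hsat u v₀ (fun h => hu.1 (hv₀ u h))
  have hSA : S ⊆ A := fun x hx => hv₀ x (hS x hx)
  have hTc : ∀ y ∈ T, S.card ≤ cnt (flip R) A y := fun y hy =>
    le_cnt (flip R) hSA (fun x hx => hST x hx y hy)
  rcases hc with ⟨h1, h2⟩ | ⟨h1, h2⟩
  · rw [← h2]
    apply le_cnt R _ hT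
    intro y hy
    simp only [setP, mem_filter, mem_univ, true_and]
    right
    exact h1 ▸ hTc y hy
  · exfalso
    have : T ⊆ A' := by
      intro y hy
      by_contra h
      have := hcl y h
      have := hTc y hy
      omega
    have := le_cnt R this hT
    omega

theorem outer_edges (R : α → β → Prop) (A : Finset α) (A' : Finset β) (k d : ℕ) (u₀ : α) (v₀ : β)
    (hu₀ : ∀ v, R u₀ v → v ∈ A') (hv₀ : ∀ u, R u v₀ → u ∈ A)
    (hdeg : ∀ u, d ≤ cnt R univ u) (hdeg' : ∀ v, d ≤ cnt (flip R) univ v)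
    (hcl : ∀ u, u ∉ A → cnt R A' u < d) (hcl' : ∀ v, v ∉ A' → cnt (flip R) A v < d)
    (hsat : ∀ u v, ¬ R u v → ∃ (S : Finset α) (T : Finset β),
      ((S.card = k ∧ T.card = d) ∨ (S.card = d ∧ T.card = k)) ∧
      (∀ x ∈ S, ∀ y ∈ T, R x y) ∧ (∀ x ∈ S, R x v) ∧ (∀ y ∈ T, R u y)) :
    k * Aᶜ.card + d * A'ᶜ.card ≤ ∑ u ∈ Aᶜ, cnt R A' u + ∑ v ∈ A'ᶜ, cnt (flip R) univ v
        + k ^ 2 / 4 ∨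
    k * A'ᶜ.card + d * Aᶜ.card ≤ ∑ v ∈ A'ᶜ, cnt (flip R) A v + ∑ u ∈ Aᶜ, cnt R univ u
        + k ^ 2 / 4 := by
  have hM := outside R A A' k d v₀ hv₀ hcl' hsat
  have hM' := outside (flip R) A' A k d u₀ hu₀ hcl (by
    intro v u h
    obtain ⟨S, T, hc, h1, h2, h3⟩ := hsat u v h
    exact ⟨T, S, by tauto, fun x hx y hy => h1 y hy x hx, h3, h2⟩)
  have hc : ∀ u ∈ setY R A A' k d, ∀ v ∈ setY (flip R) A' A k d, R u v := by
    intro u hu v hv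
    by_contra h
    obtain ⟨S, T, hc, h1, h2, h3⟩ := hsat u v h
    rcases hc with ⟨hS, hT⟩ | ⟨hS, hT⟩
    · exact type_one R A A' k d hM hM' u v hu hv S T hS hT h1 h2 h3
    · exact type_one (flip R) A' A k d hM' hM v u hv hu T S hT hS
        (fun x hx y hy => h1 y hy x hx) h3 h2
  have d1 := deficit R A A' k d hdeg'
  have d2 := deficit (flip R) A' A k d hdeg
  have s1 := sumY R A A' k d hM' hc
  have s2 := sumY (flip R) A' A k d hM (fun v hv u hu => hc u hu v hv)
  have d2' : k * A'ᶜ.card + d * Aᶜ.card ≤ ∑ v ∈ A'ᶜ, cnt (flip R) A v + ∑ u ∈ Aᶜ, cnt R univ u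
      + ∑ v ∈ setY (flip R) A' A k d, (k - cnt (flip R) (setZ R A A' k d) v) := d2
  have s2' : ∑ v ∈ setY (flip R) A' A k d, (k - cnt (flip R) (setZ R A A' k d) v)
    ≤ (setY (flip R) A' A k d).card * (k - (setY R A A' k d).card) := s2
  rcases min_bound k (setY R A A' k d).card (setY (flip R) A' A k d).card with h | h
  · left; omega
  · right; omega

/-- Edges inside the shell. -/
theorem shell_edges (R : α → β → Prop) (A₀ A : Finset α) (A₀' A' : Finset β) (d : ℕ)
    (hA : A₀ ⊆ A) (hA' : A₀' ⊆ A')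
    (hcl : ∀ u, u ∉ A → cnt R A' u < d) (hcl' : ∀ v, v ∉ A' → cnt (flip R) A v < d)
    (hmin : ∀ (D : Finset α) (D' : Finset β), A₀ ⊆ D → A₀' ⊆ D' →
      (∀ u, u ∉ D → cnt R D' u < d) → (∀ v, v ∉ D' → cnt (flip R) D v < d) →
      A ⊆ D ∧ A' ⊆ D') :
    ∑ u ∈ A₀, cnt R A₀' u + d * (A.card + A'.card)
      ≤ ∑ u ∈ A, cnt R A' u + d * (A₀.card + A₀'.card) := by
  have key : ∀ m : ℕ, ∀ (D : Finset α) (D' : Finset β), A₀ ⊆ D → A₀' ⊆ D' → D ⊆ A → D' ⊆ A' →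
      A.card + A'.card = D.card + D'.card + m →
      ∑ u ∈ D, cnt R D' u + d * (A.card + A'.card)
      ≤ ∑ u ∈ A, cnt R A' u + d * (D.card + D'.card) := by
    intro m
    induction m with
    | zero =>
      intro D D' _ _ h1 h2 h3
      have := card_le_card h1
      have := card_le_card h2
      rw [eq_of_subset_of_card_le h1 (by omega), eq_of_subset_of_card_le h2 (by omega)]
    | succ m ih =>
      intro D D' h0 h0' h1 h2 h3
      by_cases hc : ∀ u, u ∉ D → cnt R D' u < d
      · by_cases hc' : ∀ v, v ∉ D' → cnt (flip R) D v < d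
        · obtain ⟨h4, h5⟩ := hmin D D' h0 h0' hc hc'
          have := card_le_card h4
          have := card_le_card h5
          omega
        · push Not at hc'
          obtain ⟨v, hv, hd⟩ := hc'
          have hvA : v ∈ A' := by
            by_contra h
            have := hcl' v h
            have := cnt_mono (flip R) h1 v
            omega
          have := ih D (insert v D') h0 (h0'.trans (subset_insert _ _)) h1
            (insert_subset hvA h2) (by rw [card_insert_of_notMem hv]; omega)
          rw [sum_cnt_comm R D, sum_insert hv, ← sum_cnt_comm R D, card_insert_of_notMem hv] at this
          linarith
      · push Not at hc
        obtain ⟨u, hu, hd⟩ := hc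
        have huA : u ∈ A := by
          by_contra h
          have := hcl u h
          have := cnt_mono R h2 u
          omega
        have := ih (insert u D) D' (h0.trans (subset_insert _ _)) h0' (insert_subset huA h1)
          h2 (by rw [card_insert_of_notMem hu]; omega)
        rw [sum_insert hu, card_insert_of_notMem hu] at this
        linarith
  have := card_le_card hA
  have := card_le_card hA'
  exact key (A.card + A'.card - (A₀.card + A₀'.card)) A₀ A₀' (Subset.refl _) (Subset.refl _) hA hA'
    (by omega)

theorem split_edges (R : α → β → Prop) (A : Finset α) (A' : Finset β) :
    ∑ u, cnt R univ u = ∑ u ∈ A, cnt R A' u + ∑ u ∈ Aᶜ, cnt R A' u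
      + ∑ v ∈ A'ᶜ, cnt (flip R) univ v := by
  rw [sum_add_sum_compl A, sum_cnt_comm R univ A', sum_cnt_comm R univ univ, sum_add_sum_compl]

theorem unfold_sat {n : ℕ} (E : Finset (Fin n × Fin n)) (a b : ℕ) (hE : ¬ containsK E a b)
    (u v : Fin n) (h : containsK (insert (u, v) E) a b) : ∃ S T : Finset (Fin n),
      S.card = a - 1 ∧ T.card = b - 1 ∧
      (∀ x ∈ S, ∀ y ∈ T, (x, y) ∈ E) ∧ (∀ x ∈ S, (x, v) ∈ E) ∧ (∀ y ∈ T, (u, y) ∈ E) := by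
  obtain ⟨S, T, hS, hT, h⟩ := h
  have hin : ∀ x ∈ S, ∀ y ∈ T, (x ≠ u ∨ y ≠ v) → (x, y) ∈ E := by
    intro x hx y hy hne
    have := h x hx y hy
    rw [mem_insert, Prod.mk.injEq] at this
    tauto
  have hu : u ∈ S := by
    by_contra hu
    exact hE ⟨S, T, hS, hT, fun x hx y hy => hin x hx y hy (Or.inl fun e => hu (e ▸ hx))⟩
  have hv : v ∈ T := by
    by_contra hv
    exact hE ⟨S, T, hS, hT, fun x hx y hy => hin x hx y hy (Or.inr fun e => hv (e ▸ hy))⟩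
  refine ⟨S.erase u, T.erase v, by rw [card_erase_of_mem hu, hS],
    by rw [card_erase_of_mem hv, hT], ?_, ?_, ?_⟩
  · intro x hx y hy
    exact hin x (mem_of_mem_erase hx) y (mem_of_mem_erase hy) (Or.inl (ne_of_mem_erase hx))
  · intro x hx
    exact hin x (mem_of_mem_erase hx) v hv (Or.inl (ne_of_mem_erase hx))
  · intro y hy
    exact hin u hu y (mem_of_mem_erase hy) (Or.inr (ne_of_mem_erase hy))

theorem edges_cnt {n : ℕ} (E : Finset (Fin n × Fin n)) (X Y : Finset (Fin n)) :
    ∑ u ∈ X, cnt (fun u v => (u, v) ∈ E) Y u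
      = (E.filter fun p => p.1 ∈ X ∧ p.2 ∈ Y).card := by
  rw [card_eq_sum_card_fiberwise (f := Prod.fst) (t := X) (by
    intro p hp
    simp only [coe_filter, Set.mem_ofPred_eq] at hp
    exact hp.2.1)]
  apply sum_congr rfl
  intro u hu
  unfold cnt
  apply card_bij (fun v _ => (u, v))
  · intro v hv
    simp only [mem_filter] at hv ⊢
    tauto
  · intro a _ b _ h
    simpa using h
  · rintro ⟨a, b⟩ h
    simp only [mem_filter] at h
    obtain ⟨⟨h1, h2⟩, rfl⟩ := h
    exact ⟨b, by simp only [mem_filter]; tauto, rfl⟩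

theorem degL_cnt {n : ℕ} (E : Finset (Fin n × Fin n)) (u : Fin n) :
    degL E u = cnt (fun u v => (u, v) ∈ E) univ u := by
  have := edges_cnt E {u} univ
  rw [sum_singleton] at this
  rw [this]
  unfold degL
  congr 1
  ext p
  simp

theorem degR_cnt {n : ℕ} (E : Finset (Fin n × Fin n)) (v : Fin n) :
    degR E v = cnt (flip fun u v => (u, v) ∈ E) univ v := by
  have := edges_cnt E univ {v}
  rw [sum_cnt_comm, sum_singleton] at this
  rw [this]
  unfold degR
  congr 1
  ext p
  simp

theorem cnt_eq {n : ℕ} (E : Finset (Fin n × Fin n)) (X : Finset (Fin n)) (u : Fin n)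
    [DecidablePred fun v => (u, v) ∈ E] :
    (X.filter fun v => (u, v) ∈ E).card = cnt (fun u v => (u, v) ∈ E) X u := by
  unfold cnt; congr

theorem cnt_eq' {n : ℕ} (E : Finset (Fin n × Fin n)) (X : Finset (Fin n)) (v : Fin n)
    [DecidablePred fun u => (u, v) ∈ E] :
    (X.filter fun u => (u, v) ∈ E).card = cnt (flip fun u v => (u, v) ∈ E) X v := by
  unfold cnt flip; congr

end helpers

theorem stmt9 (n s t : ℕ) (hs : 1 ≤ s) (hst : s ≤ t) (htn : t ≤ n)
    (E : Finset (Fin n × Fin n)) (hsat : Saturated s t E)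
    (hminL : ∀ u : Fin n, t - 1 ≤ degL E u) (hminR : ∀ v : Fin n, t - 1 ≤ degR E v)
    (A₀ A₀' : Finset (Fin n)) (u₀ u₀' : Fin n)
    (hu₀ : u₀ ∈ A₀) (hu₀' : u₀' ∈ A₀')
    (hN₀ : ∀ v : Fin n, (u₀, v) ∈ E → v ∈ A₀')
    (hN₀' : ∀ u : Fin n, (u, u₀') ∈ E → u ∈ A₀)
    (A A' : Finset (Fin n)) (hA₀A : A₀ ⊆ A) (hA₀'A' : A₀' ⊆ A')
    (hclosedL : ∀ u : Fin n, u ∉ A → (A'.filter fun v => (u, v) ∈ E).card < t - 1)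
    (hclosedR : ∀ v : Fin n, v ∉ A' → (A.filter fun u => (u, v) ∈ E).card < t - 1)
    (hmin : ∀ D D' : Finset (Fin n), A₀ ⊆ D → A₀' ⊆ D' →
      (∀ u : Fin n, u ∉ D → (D'.filter fun v => (u, v) ∈ E).card < t - 1) →
      (∀ v : Fin n, v ∉ D' → (D.filter fun u => (u, v) ∈ E).card < t - 1) →
      A ⊆ D ∧ A' ⊆ D') :
    (n : ℤ) * (s + t - 2 : ℕ) - ((A₀.card + A₀'.card : ℕ) : ℤ) * ((t - 1 : ℕ) : ℤ)
        - (((s - 1) ^ 2 / 4 : ℕ) : ℤ)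
        + ((E.filter fun p => p.1 ∈ A₀ ∧ p.2 ∈ A₀').card : ℤ)
        + min (((t - s) * A.card : ℕ) : ℤ) (((t - s) * A'.card : ℕ) : ℤ)
      ≤ (E.card : ℤ) := by
  simp only [cnt_eq, cnt_eq'] at hclosedL hclosedR hmin
  set R : Fin n → Fin n → Prop := fun u v => (u, v) ∈ E with hR
  have hsh := shell_edges R A₀ A A₀' A' (t - 1) hA₀A hA₀'A' hclosedL hclosedR hmin
  have hout := outer_edges R A A' (s - 1) (t - 1) u₀ u₀'
    (fun v hv => hA₀'A' (hN₀ v hv)) (fun u hu => hA₀A (hN₀' u hu))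
    (fun u => degL_cnt E u ▸ hminL u) (fun v => degR_cnt E v ▸ hminR v)
    hclosedL hclosedR (by
      intro u v h
      rcases hsat.2 u v h with h1 | h1
      · obtain ⟨S, T, hS, hT, h2⟩ := unfold_sat E s t (fun h => hsat.1 (Or.inl h)) u v h1
        exact ⟨S, T, Or.inl ⟨hS, hT⟩, h2⟩
      · obtain ⟨S, T, hS, hT, h2⟩ := unfold_sat E t s (fun h => hsat.1 (Or.inr h)) u v h1
        exact ⟨S, T, Or.inr ⟨hS, hT⟩, h2⟩)
  have hE : E.card = ∑ u, cnt R univ u := by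
    rw [edges_cnt E univ univ]; simp
  have hE1 := split_edges R A A'
  have hE2 := split_edges (flip R) A' A
  have hE3 : ∑ u, cnt R univ u = ∑ u ∈ A, cnt R A' u + ∑ v ∈ A'ᶜ, cnt (flip R) A v
      + ∑ u ∈ Aᶜ, cnt R univ u := by
    rw [sum_cnt_comm R univ univ, hE2, sum_cnt_comm R A A']; rfl
  have hin := edges_cnt E A₀ A₀'
  have hin' : ((E.filter fun p => p.1 ∈ A₀ ∧ p.2 ∈ A₀').card) = ∑ u ∈ A₀, cnt R A₀' u := by
    rw [hin]
  rw [hin']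
  have hcA : A.card + Aᶜ.card = n := by simpa using card_add_card_compl A
  have hcA' : A'.card + A'ᶜ.card = n := by simpa using card_add_card_compl A'
  obtain ⟨k, rfl⟩ := Nat.exists_eq_add_of_le' hs
  obtain ⟨e, rfl⟩ := Nat.exists_eq_add_of_le hst
  have r1 : k + 1 + (k + 1 + e) - 2 = 2 * k + e := by omega
  have r2 : k + 1 + e - 1 = k + e := by omega
  have r3 : k + 1 + e - (k + 1) = e := by omega
  simp only [r2, Nat.add_sub_cancel] at hsh hout
  rw [r1, r2, r3, Nat.add_sub_cancel]
  rcases hout with h | h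
  · refine le_trans (add_le_add_right (min_le_left _ _) _) ?_
    rw [hE]
    generalize k ^ 2 / 4 = q at *
    zify at *
    have p1 : (Aᶜ.card : ℤ) = n - A.card := by linarith
    have p2 : (A'ᶜ.card : ℤ) = n - A'.card := by linarith
    rw [p1, p2] at h
    linarith
  · refine le_trans (add_le_add_right (min_le_right _ _) _) ?_
    rw [hE]
    generalize k ^ 2 / 4 = q at *
    zify at *
    have p1 : (Aᶜ.card : ℤ) = n - A.card := by linarith
    have p2 : (A'ᶜ.card : ℤ) = n - A'.card := by linarith
    rw [p1, p2] at h
    linarith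
end
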